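/- arXiv:1905.02387 — 2 statements merged into one kernel-verified Lean document; each statement's English description precedes it below -/
import Mathlib

section
/- For every n ≥ 2, the number of king permutations in K_n that have no prince equals 2^k · k! if n = 4k for some positive integer k, and equals 0 otherwise. -/
open Equiv

/-- The Manhattan distance between two elements of `Fin n`. -/
def fdist {n : ℕ} (a b : Fin n) : ℕ := ((a : ℤ) - (b : ℤ)).natAbs

/-- A king permutation: no two adjacent positions carry adjacent values. -/
def IsKing {n : ℕ} (σ : Equiv.Perm (Fin n)) : Prop :=
  ∀ i j : Fin n, (j : ℕ) = (i : ℕ) + 1 → fdist (σ i) (σ j) ≠ 1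

/-- Pattern containment `π ⪯ σ`. -/
def Contains {m n : ℕ} (π : Equiv.Perm (Fin m)) (σ : Equiv.Perm (Fin n)) : Prop :=
  ∃ f : Fin m ↪o Fin n, ∀ a b : Fin m, π a < π b ↔ σ (f a) < σ (f b)

/-- Strict pattern containment `π ≺ σ`. -/
def StrictContains {m n : ℕ} (π : Equiv.Perm (Fin m)) (σ : Equiv.Perm (Fin n)) : Prop :=
  Contains π σ ∧ m < n

/-- `nabla σ i` deletes the `i`-th entry of `σ` and standardizes. -/
def nabla {n : ℕ} (σ : Equiv.Perm (Fin (n + 1))) (i : Fin (n + 1)) : Equiv.Perm (Fin n) :=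
  Equiv.removeNone ((finSuccEquiv' i).symm.trans (σ.trans (finSuccEquiv' (σ i))))

/-- `nablaStar σ a` deletes the value `a` from `σ` and standardizes. -/
def nablaStar {n : ℕ} (σ : Equiv.Perm (Fin (n + 1))) (a : Fin (n + 1)) : Equiv.Perm (Fin n) :=
  nabla σ (σ⁻¹ a)

/-- The permutation [2413] (0-based one-line notation [1,3,0,2]). -/
def p2413 : Equiv.Perm (Fin 4) :=
  ⟨![1, 3, 0, 2], ![2, 0, 3, 1], by intro x; fin_cases x <;> rfl, by intro x; fin_cases x <;> rfl⟩

/-- The permutation [3142] (0-based one-line notation [2,0,3,1]). -/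
def p3142 : Equiv.Perm (Fin 4) :=
  ⟨![2, 0, 3, 1], ![1, 3, 0, 2], by intro x; fin_cases x <;> rfl, by intro x; fin_cases x <;> rfl⟩

/-- `σ i` vertically separates `σ j` from `σ k`. -/
def VSep {n : ℕ} (σ : Equiv.Perm (Fin n)) (i j k : Fin n) : Prop :=
  i ≠ j ∧ i ≠ k ∧ j ≠ k ∧ fdist i j = 1 ∧ fdist i k = 1 ∧ fdist (σ j) (σ k) = 1

/-- `σ i` horizontally separates `σ j` from `σ k`. -/
def HSep {n : ℕ} (σ : Equiv.Perm (Fin n)) (i j k : Fin n) : Prop :=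
  i ≠ j ∧ i ≠ k ∧ j ≠ k ∧ fdist (σ i) (σ j) = 1 ∧ fdist (σ i) (σ k) = 1 ∧ fdist j k = 1

/-- `σ i` separates `σ j` from `σ k`. -/
def Separates {n : ℕ} (σ : Equiv.Perm (Fin n)) (i j k : Fin n) : Prop :=
  VSep σ i j k ∨ HSep σ i j k

/-- `π` has a 2-block at positions `j`, `j+1` (0-based). -/
def HasTwoBlockAt {n : ℕ} (π : Equiv.Perm (Fin n)) (j : ℕ) : Prop :=
  ∃ hj : j + 1 < n, fdist (π ⟨j, by omega⟩) (π ⟨j + 1, hj⟩) = 1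

/-- `π` has a 3-block at positions `p`, `p+1`, `p+2` (0-based). -/
def HasThreeBlockAt {n : ℕ} (π : Equiv.Perm (Fin n)) (p : ℕ) : Prop :=
  ∃ hp : p + 2 < n, ∃ m : ℕ,
    ({(π ⟨p, by omega⟩ : ℕ), (π ⟨p + 1, by omega⟩ : ℕ), (π ⟨p + 2, by omega⟩ : ℕ)} : Finset ℕ)
      = {m, m + 1, m + 2}

def SepZ (n : ℕ) (s : ℕ → ℤ) (p : ℕ) : Prop :=
  (∃ q, p = q + 1 ∧ q + 2 < n ∧ (s q = s (q+2) + 1 ∨ s (q+2) = s q + 1)) ∨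
  (∃ q, q + 1 < n ∧ ((s q = s p + 1 ∧ s (q+1) = s p - 1) ∨ (s q = s p - 1 ∧ s (q+1) = s p + 1)))

def CutZ (s : ℕ → ℤ) (p : ℕ) : Prop :=
  (p = 0 ∨ ∃ q a b, p = q + 1 ∧ a < p ∧ b < p ∧ s a = s q + 1 ∧ s b = s q - 1) ∧
  (∀ j, j + 1 < p → (s (j+1) = s j + 2 → ∃ a < p, s a = s j + 1) ∧
    (s (j+1) = s j - 2 → ∃ a < p, s a = s j - 1))

def UpBlk (s : ℕ → ℤ) (p : ℕ) : Prop :=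
  s (p+1) = s p + 2 ∧ s (p+2) = s p - 1 ∧ s (p+3) = s p + 1

def DnBlk (s : ℕ → ℤ) (p : ℕ) : Prop :=
  s (p+1) = s p - 2 ∧ s (p+2) = s p + 1 ∧ s (p+3) = s p - 1

structure KingZ (n : ℕ) (s : ℕ → ℤ) : Prop where
  inj : ∀ p q, p < n → q < n → s p = s q → p = q
  king : ∀ p, p + 1 < n → s (p+1) ≠ s p + 1 ∧ s (p+1) ≠ s p - 1

lemma CutZ.neg {s : ℕ → ℤ} {p : ℕ} (h : CutZ s p) : CutZ (fun x => - s x) p := by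
  obtain ⟨h1, h2⟩ := h
  refine ⟨?_, ?_⟩
  · rcases h1 with h | ⟨q, a, b, h⟩
    · exact Or.inl h
    · exact Or.inr ⟨q, b, a, by dsimp only; omega⟩
  · intro j hj
    obtain ⟨h3, h4⟩ := h2 j hj
    refine ⟨fun h => ?_, fun h => ?_⟩
    · obtain ⟨a, ha, e⟩ := h4 (by dsimp only at h; omega)
      exact ⟨a, ha, by dsimp only; omega⟩
    · obtain ⟨a, ha, e⟩ := h3 (by dsimp only at h; omega)
      exact ⟨a, ha, by dsimp only; omega⟩

lemma SepZ.neg {n : ℕ} {s : ℕ → ℤ} {p : ℕ} (h : SepZ n s p) : SepZ n (fun x => - s x) p := by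
  rcases h with ⟨q, h⟩ | ⟨q, h⟩
  · exact Or.inl ⟨q, by dsimp only; omega⟩
  · exact Or.inr ⟨q, by dsimp only; omega⟩

lemma KingZ.neg {n : ℕ} {s : ℕ → ℤ} (h : KingZ n s) : KingZ n (fun x => - s x) :=
  ⟨fun p q hp hq e => h.inj p q hp hq (by omega),
   fun p hp => by have := h.king p hp; omega⟩

lemma core {n : ℕ} {s : ℕ → ℤ} (K : KingZ n s) (S : ∀ p < n, SepZ n s p) {p : ℕ}
    (C : CutZ s p) {j : ℕ} (hpj : p < j) (hj : j + 1 < n) (h1 : s j = s p - 1)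
    (h2 : s (j+1) = s p + 1) : p + 3 < n ∧ UpBlk s p := by
  have inj := K.inj
  -- position p-1 does not carry s p ± 2
  have C1 : ∀ q, p = q + 1 → s q ≠ s p + 2 ∧ s q ≠ s p - 2 := by
    intro q hq
    rcases C.1 with h | ⟨q', a, b, h, ha, hb, e1, e2⟩
    · omega
    · obtain rfl : q = q' := by omega
      refine ⟨fun e => ?_, fun e => ?_⟩
      · have := inj b (j+1) (by omega) (by omega) (by omega); omega
      · have := inj a j (by omega) (by omega) (by omega); omega
  have hpj1 : p + 1 ≠ j := by
    rintro rfl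
    have := K.king p (by omega); omega
  -- j
  have A : (∃ q, j = q + 1 ∧ s q = s p + 2) ∨ s (p+1) = s p - 2 := by
    rcases S j (by omega) with ⟨q, rfl, hq, h⟩ | ⟨q, hq, h⟩
    · left; refine ⟨q, rfl, ?_⟩
      rcases h with h | h
      · have : s (q+2) = s p + 1 := h2
        omega
      · exfalso
        have : s (q+2) = s p + 1 := h2
        have := inj q p (by omega) (by omega) (by omega); omega
    · right
      rcases h with ⟨h3, h4⟩ | ⟨h3, h4⟩
      · obtain rfl := inj q p (by omega) (by omega) (by omega); omega
      · have e := inj (q+1) p (by omega) (by omega) (by omega)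
        have := C1 q e.symm; omega
  have B : (j + 2 < n ∧ s (j+2) = s p - 2) ∨ s (p+1) = s p + 2 := by
    rcases S (j+1) (by omega) with ⟨q, e, hq, h⟩ | ⟨q, hq, h⟩
    · left
      obtain rfl : j = q := by omega
      refine ⟨hq, ?_⟩
      rcases h with h | h
      · omega
      · exfalso
        have := inj (j+2) p (by omega) (by omega) (by omega); omega
    · right
      rcases h with ⟨h3, h4⟩ | ⟨h3, h4⟩
      · have e := inj (q+1) p (by omega) (by omega) (by omega)
        have := C1 q e.symm; omega
      · obtain rfl := inj q p (by omega) (by omega) (by omega); omega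
  rcases A with ⟨q, rfl, hq⟩ | A
  · have main : s (p+1) = s p + 2 := by
      rcases B with ⟨hB, B⟩ | B
      · by_contra hne
        have hqp : q ≠ p + 1 := by rintro rfl; exact hne hq
        rcases S q (by omega) with ⟨r, rfl, hr, h⟩ | ⟨r, hr, h⟩
        · have e3 : s (r+2) = s p - 1 := h1
          rcases h with h | h
          · have := inj r p (by omega) (by omega) (by omega); omega
          · have := inj r (r+1+1+2) (by omega) (by omega) (by omega); omega
        · rcases h with ⟨h3, h4⟩ | ⟨h3, h4⟩
          · have e := inj (r+1) (q+1+1) (by omega) (by omega) (by omega)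
            obtain rfl : r = q + 1 := by omega
            omega
          · have e := inj r (q+1+1) (by omega) (by omega) (by omega)
            subst e
            have : s (q+1+1+1) = s p - 2 := B
            omega
      · exact B
    have := inj q (p+1) (by omega) (by omega) (by omega)
    subst this
    exact ⟨by omega, main, h1, h2⟩
  · rcases B with ⟨hB, B⟩ | B
    · have := inj (j+2) (p+1) (by omega) (by omega) (by omega); omega
    · omega

lemma step {n : ℕ} {s : ℕ → ℤ} (K : KingZ n s) (S : ∀ p < n, SepZ n s p) {p : ℕ} (hp : p < n)
    (C : CutZ s p) : p + 3 < n ∧ (UpBlk s p ∨ DnBlk s p) := by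
  have inj := K.inj
  rcases S p hp with ⟨q, rfl, hq, h⟩ | ⟨q, hq, h⟩
  · exfalso
    rcases C.1 with h0 | ⟨q', a, b, h0, ha, hb, e1, e2⟩
    · omega
    · obtain rfl : q = q' := by omega
      rcases h with h | h
      · have := inj b (q+2) (by omega) (by omega) (by omega); omega
      · have := inj a (q+2) (by omega) (by omega) (by omega); omega
  · have hqp : p < q := by
      by_contra hle
      have n1 : q ≠ p := by rintro rfl; omega
      have n2 : q + 1 ≠ p := by rintro rfl; omega
      have := C.2 q (by omega)
      rcases h with h | h
      · obtain ⟨a, ha, e⟩ := this.2 (by omega)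
        have := inj a p (by omega) hp (by omega); omega
      · obtain ⟨a, ha, e⟩ := this.1 (by omega)
        have := inj a p (by omega) hp (by omega); omega
    rcases h with ⟨h1, h2⟩ | ⟨h1, h2⟩
    · have := core K.neg (fun p hp => (S p hp).neg) C.neg hqp hq (by omega)
        (by omega)
      refine ⟨this.1, Or.inr ?_⟩
      have := this.2
      unfold UpBlk at this
      unfold DnBlk
      dsimp only at this
      omega
    · have := core K S C hqp hq h1 h2
      exact ⟨this.1, Or.inl this.2⟩

lemma CutZ.next {s : ℕ → ℤ} {p : ℕ} (C : CutZ s p) (B : UpBlk s p ∨ DnBlk s p) :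
    CutZ s (p + 4) := by
  have B' : ∀ j, p ≤ j → j < p + 4 → j = p ∨ j = p + 1 ∨ j = p + 2 ∨ j = p + 3 := by omega
  refine ⟨Or.inr ?_, ?_⟩
  · rcases B with ⟨h1, h2, h3⟩ | ⟨h1, h2, h3⟩
    · exact ⟨p+3, p+1, p, by omega, by omega, by omega, by omega, by omega⟩
    · exact ⟨p+3, p, p+1, by omega, by omega, by omega, by omega, by omega⟩
  · intro j hj
    rcases lt_or_ge (j+1) p with h | h
    · obtain ⟨h1, h2⟩ := C.2 j h
      exact ⟨fun e => (h1 e).imp fun a h => ⟨by omega, h.2⟩,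
        fun e => (h2 e).imp fun a h => ⟨by omega, h.2⟩⟩
    · rcases h.eq_or_lt with h | h
      · rcases C.1 with h0 | ⟨q, a, b, h0, ha, hb, e1, e2⟩
        · omega
        · obtain rfl : j = q := by omega
          exact ⟨fun e => ⟨a, by omega, e1⟩, fun e => ⟨b, by omega, e2⟩⟩
      · have : j = p ∨ j = p + 1 ∨ j = p + 2 := by omega
        rcases this with rfl | rfl | rfl
        · rcases B with ⟨h1, h2, h3⟩ | ⟨h1, h2, h3⟩
          · exact ⟨fun e => ⟨j+3, by omega, by omega⟩, fun e => by omega⟩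
          · exact ⟨fun e => by omega, fun e => ⟨j+3, by omega, by omega⟩⟩
        · change (s (p+2) = _ → _) ∧ (s (p+2) = _ → _)
          rcases B with ⟨h1, h2, h3⟩ | ⟨h1, h2, h3⟩ <;>
          exact ⟨fun e => by omega, fun e => by omega⟩
        · change (s (p+3) = _ → _) ∧ (s (p+3) = _ → _)
          rcases B with ⟨h1, h2, h3⟩ | ⟨h1, h2, h3⟩
          · exact ⟨fun e => ⟨p, by omega, by omega⟩, fun e => by omega⟩
          · exact ⟨fun e => by omega, fun e => ⟨p, by omega, by omega⟩⟩

def BlkZ (n : ℕ) (s : ℕ → ℤ) : Prop :=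
  ∀ m, 4 * m < n → 4 * m + 3 < n ∧ (UpBlk s (4*m) ∨ DnBlk s (4*m))

lemma blk_of_sep {n : ℕ} {s : ℕ → ℤ} (K : KingZ n s) (S : ∀ p < n, SepZ n s p) : BlkZ n s := by
  have C : ∀ m, 4 * m ≤ n → CutZ s (4 * m) := by
    intro m
    induction m with
    | zero => intro _; exact ⟨Or.inl rfl, fun j hj => by omega⟩
    | succ m ih =>
      intro h
      have c := ih (by omega)
      exact c.next (step K S (by omega) c).2
  exact fun m hm => step K S hm (C m hm.le)

lemma cut_of_blk {n : ℕ} {s : ℕ → ℤ} (B : BlkZ n s) : ∀ m, 4 * m ≤ n → CutZ s (4 * m) := by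
  intro m
  induction m with
  | zero => intro _; exact ⟨Or.inl rfl, fun j hj => by omega⟩
  | succ m ih =>
    intro h
    exact (ih (by omega)).next (B m (by omega)).2

lemma king_of_blk {n : ℕ} {s : ℕ → ℤ} (inj : ∀ p q, p < n → q < n → s p = s q → p = q)
    (B : BlkZ n s) : KingZ n s := by
  refine ⟨inj, fun p hp => ?_⟩
  obtain ⟨m, hm⟩ : ∃ m, p = 4 * m ∨ p = 4 * m + 1 ∨ p = 4 * m + 2 ∨ p = 4 * m + 3 :=
    ⟨p / 4, by omega⟩
  obtain ⟨h1, h2⟩ := B m (by omega)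
  rcases hm with rfl | rfl | rfl | rfl
  · unfold UpBlk DnBlk at h2; omega
  · change s (4*m+2) ≠ _ ∧ s (4*m+2) ≠ _
    unfold UpBlk DnBlk at h2; omega
  · change s (4*m+3) ≠ _ ∧ s (4*m+3) ≠ _
    unfold UpBlk DnBlk at h2; omega
  · rcases (cut_of_blk B (m+1) (by omega)).1 with h0 | ⟨q, a, b, h0, ha, hb, e1, e2⟩
    · omega
    · obtain rfl : q = 4 * m + 3 := by omega
      refine ⟨fun e => ?_, fun e => ?_⟩
      · have := inj a _ (by omega) hp (by rw [e1, e]); omega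
      · have := inj b _ (by omega) hp (by rw [e2, e]); omega

lemma sep_of_blk {n : ℕ} {s : ℕ → ℤ} (B : BlkZ n s) : ∀ p < n, SepZ n s p := by
  intro p hp
  obtain ⟨m, hm⟩ : ∃ m, p = 4 * m ∨ p = 4 * m + 1 ∨ p = 4 * m + 2 ∨ p = 4 * m + 3 :=
    ⟨p / 4, by omega⟩
  obtain ⟨h1, h2⟩ := B m (by omega)
  unfold UpBlk DnBlk at h2
  rcases hm with rfl | rfl | rfl | rfl
  · exact Or.inr ⟨4*m+2, by omega, by change (_ ∧ s (4*m+3) = _) ∨ (_ ∧ s (4*m+3) = _); omega⟩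
  · exact Or.inl ⟨4*m, by omega, by omega, by omega⟩
  · exact Or.inl ⟨4*m+1, by omega, by omega, by
      change _ = s (4*m+3) + 1 ∨ s (4*m+3) = _; omega⟩
  · exact Or.inr ⟨4*m, by omega, by omega⟩

/-- aligned blocks -/
lemma aligned {n : ℕ} {s : ℕ → ℤ} (inj : ∀ p q, p < n → q < n → s p = s q → p = q)
    (surj : ∀ v : ℕ, v < n → ∃ p < n, s p = v) (bd : ∀ p < n, 0 ≤ s p ∧ s p < n)
    (B : BlkZ n s) : ∀ m, 4 * m < n → ∃ q : ℕ,
      (UpBlk s (4*m) ∧ s (4*m) = 4 * q + 1) ∨ (DnBlk s (4*m) ∧ s (4*m) = 4 * q + 2) := by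
  have B1 : ∀ m, 4 * m < n → ∃ v : ℕ, 4 * m + 3 < n ∧
      (∀ i < 4, (v:ℤ) ≤ s (4*m+i) ∧ s (4*m+i) ≤ v + 3) ∧ (∀ d < 4, ∃ i < 4, s (4*m+i) = v + (d:ℕ)) ∧
      ((UpBlk s (4*m) ∧ s (4*m) = v + 1) ∨ (DnBlk s (4*m) ∧ s (4*m) = v + 2)) := by
    intro m hm
    obtain ⟨h1, h2⟩ := B m hm
    have b1 := (bd (4*m+1) (by omega)).1
    have b2 := (bd (4*m+2) (by omega)).1
    rcases h2 with h2 | h2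
    · have h3 := h2
      obtain ⟨e1, e2, e3⟩ := h3
      refine ⟨(s (4*m+2)).toNat, h1, ?_, ?_, Or.inl ⟨h2, by omega⟩⟩
      · intro i hi; interval_cases i <;> (try simp only [add_zero]) <;> omega
      · intro i hi; interval_cases i
        · exact ⟨2, by omega, by omega⟩
        · exact ⟨0, by omega, by simp only [add_zero]; omega⟩
        · exact ⟨3, by omega, by omega⟩
        · exact ⟨1, by omega, by omega⟩
    · have h3 := h2
      obtain ⟨e1, e2, e3⟩ := h3
      refine ⟨(s (4*m+1)).toNat, h1, ?_, ?_, Or.inr ⟨h2, by omega⟩⟩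
      · intro i hi; interval_cases i <;> (try simp only [add_zero]) <;> omega
      · intro i hi; interval_cases i
        · exact ⟨1, by omega, by omega⟩
        · exact ⟨3, by omega, by omega⟩
        · exact ⟨0, by omega, by simp only [add_zero]; omega⟩
        · exact ⟨2, by omega, by omega⟩
  choose! v hn hle hex hsh using B1
  -- for every value w, located in block m, v m = 4 * (w/4)
  have key : ∀ w : ℕ, ∀ m, 4 * m < n → v m ≤ w → w ≤ v m + 3 → v m = 4 * (w / 4) := by
    intro w
    induction w using Nat.strong_induction_on with
    | _ w ih =>
      intro m hm h1 h2
      rcases h1.lt_or_eq with h | h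
      · have := ih (v m) h m hm le_rfl (by omega)
        omega
      · by_contra hne
        obtain ⟨i, hi, e⟩ := hex m hm 0 (by omega)
        have hw : w < n := by
          have := (bd (4*m+i) (by have := hn m hm; omega)).2
          omega
        obtain ⟨p, hp, ep⟩ := surj (w-1) (by omega)
        have hm' : 4 * (p / 4) < n := by omega
        have l := hle (p/4) hm' (p % 4) (by omega)
        rw [Nat.div_add_mod, ep] at l
        have := ih (w-1) (by omega) (p/4) hm' (by omega) (by omega)
        obtain ⟨i', hi', e'⟩ := hex (p/4) hm' (w - v (p/4)) (by omega)
        have := inj (4*m+i) (4*(p/4)+i') (by have := hn m hm; omega)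
          (by have := hn _ hm'; omega) (by omega)
        have : p / 4 = m := by omega
        rw [this] at l
        omega
  intro m hm
  have := key (v m) m hm le_rfl (by omega)
  refine ⟨v m / 4, ?_⟩
  have h := hsh m hm
  rcases h with h | h
  · exact Or.inl ⟨h.1, by omega⟩
  · exact Or.inr ⟨h.1, by omega⟩

/-- integer-valued extension of a permutation -/
def sOf {n : ℕ} (σ : Equiv.Perm (Fin n)) (p : ℕ) : ℤ :=
  if h : p < n then ((σ ⟨p, h⟩ : Fin n) : ℕ) else 0

lemma sOf_lt {n : ℕ} (σ : Equiv.Perm (Fin n)) {p : ℕ} (h : p < n) :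
    sOf σ p = ((σ ⟨p, h⟩ : Fin n) : ℕ) := dif_pos h

lemma sOf_fin {n : ℕ} (σ : Equiv.Perm (Fin n)) (i : Fin n) :
    sOf σ i = ((σ i : Fin n) : ℕ) := dif_pos i.2

lemma sOf_inj {n : ℕ} (σ : Equiv.Perm (Fin n)) :
    ∀ p q, p < n → q < n → sOf σ p = sOf σ q → p = q := by
  intro p q hp hq h
  rw [sOf_lt σ hp, sOf_lt σ hq] at h
  have h' : σ ⟨p, hp⟩ = σ ⟨q, hq⟩ := Fin.ext (by omega)
  simpa using σ.injective h'

lemma sOf_bd {n : ℕ} (σ : Equiv.Perm (Fin n)) :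
    ∀ p < n, 0 ≤ sOf σ p ∧ sOf σ p < n := by
  intro p hp
  rw [sOf_lt σ hp]
  have := (σ ⟨p, hp⟩).2
  omega

lemma sOf_surj {n : ℕ} (σ : Equiv.Perm (Fin n)) :
    ∀ v : ℕ, v < n → ∃ p < n, sOf σ p = v := by
  intro v hv
  refine ⟨σ.symm ⟨v, hv⟩, (σ.symm ⟨v, hv⟩).2, ?_⟩
  rw [sOf_fin]; simp

lemma isKing_iff {n : ℕ} (σ : Equiv.Perm (Fin n)) : IsKing σ ↔ KingZ n (sOf σ) := by
  constructor
  · intro h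
    refine ⟨sOf_inj σ, fun p hp => ?_⟩
    have := h ⟨p, by omega⟩ ⟨p+1, hp⟩ rfl
    rw [sOf_lt σ hp, sOf_lt σ (show p < n by omega)]
    unfold fdist at this
    omega
  · rintro ⟨_, h⟩ i j hij
    have := h i (by omega)
    rw [← hij, sOf_fin, sOf_fin] at this
    unfold fdist
    omega

lemma succAbove_val' {N : ℕ} (i : Fin (N+1)) (a : Fin N) :
    ((i.succAbove a : Fin (N+1)) : ℕ) = if (a:ℕ) < i then (a:ℕ) else a + 1 := by
  by_cases h : (a:ℕ) < i
  · rw [Fin.succAbove_of_castSucc_lt _ _ (by simpa [Fin.lt_def] using h), if_pos h]; rfl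
  · rw [Fin.succAbove_of_le_castSucc _ _ (by simpa [Fin.le_def] using h), if_neg h]; rfl

lemma exists_del {N : ℕ} (σ : Equiv.Perm (Fin (N+1))) (i : Fin (N+1)) :
    ∃ τ : Equiv.Perm (Fin N), ∀ a, (σ i).succAbove (τ a) = σ (i.succAbove a) := by
  have h : ∀ a : Fin N, ∃ b : Fin N, (σ i).succAbove b = σ (i.succAbove a) := by
    intro a
    apply Fin.exists_succAbove_eq
    intro e
    exact Fin.succAbove_ne i a (σ.injective e)
  choose t ht using h
  have ti : Function.Injective t := by
    intro a b e
    have : σ (i.succAbove a) = σ (i.succAbove b) := by rw [← ht, ← ht, e]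
    exact Fin.succAbove_right_injective (σ.injective this)
  exact ⟨Equiv.ofBijective t (Finite.injective_iff_bijective.mp ti), ht⟩

lemma sep_of_noprince {N : ℕ} (σ : Equiv.Perm (Fin (N+1))) (K : IsKing σ)
    (H : ¬ ∃ τ : Equiv.Perm (Fin N), IsKing τ ∧ StrictContains τ σ) :
    ∀ p < N + 1, SepZ (N+1) (sOf σ) p := by
  intro p hp
  obtain ⟨τ, hτ⟩ := exists_del σ ⟨p, hp⟩
  have hk : ¬ IsKing τ := by
    intro hk
    refine H ⟨τ, hk, ⟨Fin.succAboveOrderEmb ⟨p, hp⟩, fun a b => ?_⟩, Nat.lt_succ_self N⟩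
    simp only [Fin.succAboveOrderEmb_apply]
    rw [← hτ, ← hτ, Fin.succAbove_lt_succAbove_iff]
  unfold IsKing at hk
  push Not at hk
  obtain ⟨a, b, hab, hd⟩ := hk
  have ea := congrArg Fin.val (hτ a)
  have eb := congrArg Fin.val (hτ b)
  have xa := succAbove_val' ⟨p, hp⟩ a
  have xb := succAbove_val' ⟨p, hp⟩ b
  rw [succAbove_val'] at ea eb
  have sa := sOf_fin σ (Fin.succAbove ⟨p, hp⟩ a)
  have sb := sOf_fin σ (Fin.succAbove ⟨p, hp⟩ b)
  have sp := sOf_lt σ hp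
  rw [← ea, xa] at sa
  rw [← eb, xb] at sb
  have hb := b.2
  have ha := a.2
  have KZ := ((isKing_iff σ).1 K).king
  unfold fdist at hd
  dsimp only at *
  generalize ((σ ⟨p, hp⟩ : Fin (N+1)) : ℕ) = w at *
  generalize ((τ a : Fin N) : ℕ) = ta at *
  generalize ((τ b : Fin N) : ℕ) = tb at *
  generalize sOf σ = s at *
  rw [hab] at sb xb hb
  generalize (a : ℕ) = x at *
  by_cases h1 : x + 1 < p
  · rw [if_pos h1] at sb
    rw [if_pos (by omega)] at sa
    have := KZ x (by omega)
    right
    refine ⟨x, by omega, ?_⟩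
    split_ifs at sa sb <;> omega
  · by_cases h2 : x < p
    · obtain rfl : p = x + 1 := by omega
      rw [if_pos h2] at sa
      rw [if_neg h1] at sb
      have sb : s (x+2) = _ := sb
      have k1 := KZ x (by omega)
      have k2 := KZ (x+1) (by omega)
      have k2 : s (x+2) ≠ _ ∧ s (x+2) ≠ _ := k2
      left
      refine ⟨x, rfl, by omega, ?_⟩
      split_ifs at sa sb <;> omega
    · rw [if_neg h2] at sa
      rw [if_neg h1] at sb
      have := KZ (x+1) (by omega)
      right
      refine ⟨x+1, by omega, ?_⟩
      split_ifs at sa sb <;> omega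

lemma noprince_of_sep {N : ℕ} (σ : Equiv.Perm (Fin (N+1)))
    (S : ∀ p < N + 1, SepZ (N+1) (sOf σ) p) :
    ¬ ∃ τ : Equiv.Perm (Fin N), IsKing τ ∧ StrictContains τ σ := by
  rintro ⟨τ, hk, ⟨f, hf⟩, -⟩
  obtain ⟨i, hi⟩ : ∃ i : Fin (N+1), ∀ a, f a ≠ i := by
    by_contra h
    push Not at h
    have : Function.Surjective f := h
    have := Fintype.card_le_of_surjective f this
    simp at this
  have aux : ∀ (g : Fin N → Fin (N+1)) (j : Fin (N+1)), StrictMono g → (∀ a, g a ≠ j) →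
      g = j.succAbove := by
    intro g j hg hj
    apply (StrictMono.range_inj hg (Fin.strictMono_succAbove j)).1
    rw [Fin.range_succAbove]
    apply Set.eq_of_subset_of_ncard_le
    · rintro _ ⟨a, rfl⟩; exact hj a
    · rw [← Set.image_univ, Set.ncard_image_of_injective _ hg.injective, Set.ncard_compl]
      simp
    · exact Set.toFinite _
  have ef := aux f i f.strictMono hi
  have eg := aux (fun b => σ (f (τ.symm b))) (σ i) (by
      intro a b hab
      dsimp only
      rw [← hf]; simpa using hab) (by
      intro a e; exact hi _ (σ.injective e))
  have hτ : ∀ a, (σ i).succAbove (τ a) = σ (i.succAbove a) := by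
    intro a
    rw [← eg, ← ef]; simp
  clear aux ef eg hf hi f
  have val : ∀ a : Fin N, sOf σ (if (a:ℕ) < i then (a:ℕ) else a + 1) =
      (if ((τ a : Fin N) : ℕ) < ((σ i : Fin (N+1)) : ℕ) then ((τ a : Fin N) : ℕ)
        else (τ a : ℕ) + 1 : ℕ) := by
    intro a
    rw [← succAbove_val', ← succAbove_val', sOf_fin, hτ]
  have kk : ∀ x, (hx : x + 1 < N) → fdist (τ ⟨x, by omega⟩) (τ ⟨x+1, hx⟩) ≠ 1 :=
    fun x hx => hk _ _ rfl
  unfold fdist at kk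
  have hi2 := i.2
  have si := sOf_fin σ i
  rcases S i i.2 with ⟨q, hq, hq2, h⟩ | ⟨q, hq, h⟩
  · have ka := kk q (by omega)
    have va := val ⟨q, by omega⟩
    have vb := val ⟨q+1, by omega⟩
    dsimp only at va vb
    rw [if_pos (by omega)] at va
    rw [if_neg (by omega)] at vb
    have vb : sOf σ (q+2) = _ := vb
    split_ifs at va vb <;> omega
  · have n1 : q ≠ i := by rintro rfl; omega
    have n2 : q + 1 ≠ i := by intro e; rw [e] at h; omega
    by_cases hlt : q < i
    · have ka := kk q (by omega)
      have va := val ⟨q, by omega⟩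
      have vb := val ⟨q+1, by omega⟩
      dsimp only at va vb
      rw [if_pos (by omega)] at va
      rw [if_pos (by omega)] at vb
      split_ifs at va vb <;> omega
    · obtain ⟨r, rfl⟩ : ∃ r, q = r + 1 := ⟨q - 1, by omega⟩
      have ka := kk r (by omega)
      have va := val ⟨r, by omega⟩
      have vb := val ⟨r+1, by omega⟩
      dsimp only at va vb
      rw [if_neg (by omega)] at va
      rw [if_neg (by omega)] at vb
      split_ifs at va vb <;> omega

lemma main_iff {n : ℕ} (hn : 0 < n) (σ : Equiv.Perm (Fin n)) :
    (IsKing σ ∧ ¬ ∃ τ : Equiv.Perm (Fin (n - 1)), IsKing τ ∧ StrictContains τ σ) ↔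
      BlkZ n (sOf σ) := by
  obtain ⟨N, rfl⟩ : ∃ N, n = N + 1 := ⟨n - 1, by omega⟩
  constructor
  · rintro ⟨K, H⟩
    exact blk_of_sep ((isKing_iff σ).1 K) (sep_of_noprince σ K H)
  · intro B
    exact ⟨(isKing_iff σ).2 (king_of_blk (sOf_inj σ) B), noprince_of_sep σ (sep_of_blk B)⟩

/-- inflation of a permutation by copies of 2413 and 3142 -/
def infl {k : ℕ} (x : (Fin k → Bool) × Equiv.Perm (Fin k)) : Equiv.Perm (Fin (k * 4)) :=
  finProdFinEquiv.permCongr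
    (Equiv.prodShear x.2 (fun m => if x.1 m then p2413 else p3142))

lemma infl_val {k : ℕ} (x : (Fin k → Bool) × Equiv.Perm (Fin k)) (m : Fin k) (i : Fin 4) :
    sOf (infl x) (4 * (m:ℕ) + i) =
      4 * ((x.2 m : Fin k) : ℕ) + (((if x.1 m then p2413 else p3142) i : Fin 4) : ℕ) := by
  have e : 4 * (m:ℕ) + i = ((finProdFinEquiv (m, i) : Fin (k*4)) : ℕ) := by
    simp [finProdFinEquiv]; omega
  rw [e, sOf_fin, infl, Equiv.permCongr_apply, Equiv.symm_apply_apply, Equiv.prodShear_apply]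
  simp [finProdFinEquiv]
  omega

lemma infl_up {k : ℕ} (x : (Fin k → Bool) × Equiv.Perm (Fin k)) (m : Fin k) (h : x.1 m = true) :
    sOf (infl x) (4 * (m:ℕ)) = 4 * ((x.2 m : Fin k) : ℕ) + 1 ∧ UpBlk (sOf (infl x)) (4 * (m:ℕ)) := by
  have h0 := infl_val x m 0
  have h1 := infl_val x m 1
  have h2 := infl_val x m 2
  have h3 := infl_val x m 3
  simp [h, p2413] at h0 h1 h2 h3
  refine ⟨by omega, by omega, by omega, by omega⟩

lemma infl_dn {k : ℕ} (x : (Fin k → Bool) × Equiv.Perm (Fin k)) (m : Fin k) (h : x.1 m = false) :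
    sOf (infl x) (4 * (m:ℕ)) = 4 * ((x.2 m : Fin k) : ℕ) + 2 ∧ DnBlk (sOf (infl x)) (4 * (m:ℕ)) := by
  have h0 := infl_val x m 0
  have h1 := infl_val x m 1
  have h2 := infl_val x m 2
  have h3 := infl_val x m 3
  simp [h, p3142] at h0 h1 h2 h3
  refine ⟨by omega, by omega, by omega, by omega⟩

lemma infl_blk {k : ℕ} (x : (Fin k → Bool) × Equiv.Perm (Fin k)) : BlkZ (k*4) (sOf (infl x)) := by
  intro m hm
  refine ⟨by omega, ?_⟩
  have hmk : m < k := by omega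
  cases h : x.1 ⟨m, hmk⟩
  · exact Or.inr (infl_dn x ⟨m, hmk⟩ h).2
  · exact Or.inl (infl_up x ⟨m, hmk⟩ h).2

lemma infl_inj {k : ℕ} : Function.Injective (infl (k := k)) := by
  intro x y e
  have hh : ∀ m, x.1 m = y.1 m ∧ x.2 m = y.2 m := by
    intro m
    have key : sOf (infl x) (4 * (m:ℕ)) = sOf (infl y) (4 * (m:ℕ)) := by rw [e]
    cases h : x.1 m <;> cases h' : y.1 m
    · rw [(infl_dn x m h).1, (infl_dn y m h').1] at key
      exact ⟨rfl, Fin.ext (by omega)⟩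
    · rw [(infl_dn x m h).1, (infl_up y m h').1] at key
      omega
    · rw [(infl_up x m h).1, (infl_dn y m h').1] at key
      omega
    · rw [(infl_up x m h).1, (infl_up y m h').1] at key
      exact ⟨rfl, Fin.ext (by omega)⟩
  exact Prod.ext (funext fun m => (hh m).1) (Equiv.ext fun m => (hh m).2)

lemma infl_surj {k : ℕ} (σ : Equiv.Perm (Fin (k*4))) (B : BlkZ (k*4) (sOf σ)) :
    ∃ x, infl x = σ := by
  have al := aligned (sOf_inj σ) (sOf_surj σ) (sOf_bd σ) B
  have al' : ∀ m : Fin k, ∃ q : Fin k, ∃ b : Bool,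
      (b = true → UpBlk (sOf σ) (4*m) ∧ sOf σ (4*m) = 4 * (q:ℕ) + 1) ∧
      (b = false → DnBlk (sOf σ) (4*m) ∧ sOf σ (4*m) = 4 * (q:ℕ) + 2) := by
    intro m
    have hm := m.2
    obtain ⟨q, h⟩ := al m (by omega)
    have := sOf_bd σ (4*m) (by omega)
    refine ⟨⟨q, by omega⟩, ?_⟩
    rcases h with h | h
    · exact ⟨true, fun _ => h, by simp⟩
    · exact ⟨false, by simp, fun _ => h⟩
  choose π b hu hd using al'
  have inj : Function.Injective π := by
    intro m m' e
    have hm := m.2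
    have hm' := m'.2
    -- position of value 4q
    have pos : ∀ m : Fin k, sOf σ (4*m+(if b m = true then 2 else 1)) = 4 * (π m : ℕ) := by
      intro m
      cases h : b m
      · have := hd m h
        unfold DnBlk at this
        simp; omega
      · have := hu m h
        unfold UpBlk at this
        simp; omega
    have := sOf_inj σ _ _ (by split_ifs <;> omega) (by split_ifs <;> omega)
      ((pos m).trans ((congrArg (fun z : Fin k => 4 * ((z:ℕ):ℤ)) e).trans (pos m').symm))
    apply Fin.ext
    split_ifs at this <;> omega
  let P : Equiv.Perm (Fin k) := Equiv.ofBijective π (Finite.injective_iff_bijective.mp inj)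
  refine ⟨(b, P), ?_⟩
  have hP : ∀ m, P m = π m := fun _ => rfl
  ext p
  have hp := p.2
  have key : sOf (infl (b, P)) p = sOf σ p := by
    obtain ⟨m, hm⟩ : ∃ m, (p:ℕ) = 4 * m ∨ (p:ℕ) = 4 * m + 1 ∨ (p:ℕ) = 4 * m + 2 ∨
      (p:ℕ) = 4 * m + 3 := ⟨p / 4, by omega⟩
    have hmk : m < k := by omega
    cases h : b ⟨m, hmk⟩
    · have h1 := hd _ h
      have h2 := infl_dn (b, P) ⟨m, hmk⟩ h
      unfold DnBlk at h1 h2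
      have h3 := congrArg Fin.val (hP ⟨m, hmk⟩)
      dsimp only at h1 h2
      rcases hm with hm | hm | hm | hm <;> rw [hm] <;> omega
    · have h1 := hu _ h
      have h2 := infl_up (b, P) ⟨m, hmk⟩ h
      unfold UpBlk at h1 h2
      have h3 := congrArg Fin.val (hP ⟨m, hmk⟩)
      dsimp only at h1 h2
      rcases hm with hm | hm | hm | hm <;> rw [hm] <;> omega
  rw [sOf_fin, sOf_fin] at key
  exact_mod_cast key

/-- for `n ≥ 2`, the number of kings of length `n` without a prince is
`2^k · k!` if `n = 4k` (`k ≥ 1`), and `0` otherwise. -/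
theorem count_kings_without_prince (n : ℕ) (hn : 2 ≤ n) :
    (∀ k : ℕ, 0 < k → n = 4 * k →
      Nat.card {σ : Equiv.Perm (Fin n) // IsKing σ ∧
        ¬ ∃ τ : Equiv.Perm (Fin (n - 1)), IsKing τ ∧ StrictContains τ σ}
        = 2 ^ k * Nat.factorial k) ∧
    ((¬ ∃ k : ℕ, 0 < k ∧ n = 4 * k) →
      Nat.card {σ : Equiv.Perm (Fin n) // IsKing σ ∧
        ¬ ∃ τ : Equiv.Perm (Fin (n - 1)), IsKing τ ∧ StrictContains τ σ} = 0) := by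
  constructor
  · rintro k hk rfl
    rw [mul_comm 4 k]
    have hpos : 0 < k * 4 := by omega
    let F : (Fin k → Bool) × Equiv.Perm (Fin k) →
        {σ : Equiv.Perm (Fin (k * 4)) // IsKing σ ∧
        ¬ ∃ τ : Equiv.Perm (Fin (k * 4 - 1)), IsKing τ ∧ StrictContains τ σ} :=
      fun x => ⟨infl x, (main_iff hpos _).2 (infl_blk x)⟩
    have hF : Function.Bijective F := by
      constructor
      · intro x y e
        exact infl_inj (congrArg Subtype.val e)
      · rintro ⟨σ, hσ⟩
        obtain ⟨x, hx⟩ := infl_surj σ ((main_iff hpos _).1 hσ)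
        exact ⟨x, Subtype.ext hx⟩
    rw [← Nat.card_congr (Equiv.ofBijective F hF)]
    simp [Fintype.card_perm]
  · intro h
    have : IsEmpty {σ : Equiv.Perm (Fin n) // IsKing σ ∧
        ¬ ∃ τ : Equiv.Perm (Fin (n - 1)), IsKing τ ∧ StrictContains τ σ} := by
      constructor
      rintro ⟨σ, hσ⟩
      have B := (main_iff (by omega) σ).1 hσ
      apply h
      refine ⟨n / 4, ?_, ?_⟩
      · have := (B 0 (by omega)).1
        omega
      · by_contra hne
        have := (B (n/4) (by omega)).1
        omega
    exact Nat.card_of_isEmpty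
end

section
/- Let π be a king permutation and let C(π) be the set of king permutations σ with σ ≺ π such that there is no king permutation δ with σ ≺ δ ≺ π. If there is exactly one σ ∈ C(π) such that both [3142] ≺ σ and [2413] ≺ σ, then μ(π) = 0. -/
open Equiv

open scoped Classical in
/-- The Möbius function of the poset of king permutations:
`μ([1]) = 1` and, for longer kings, `μ(σ) = -∑ μ(τ)` over all king permutations `τ ≺ σ`. -/
noncomputable def kingMu : (n : ℕ) → Equiv.Perm (Fin n) → ℤ
  | 0, _ => 1
  | 1, _ => 1
  | n + 2, σ =>
    - ∑ l ∈ (Finset.Ico 1 (n + 2)).attach,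
        ∑ τ ∈ Finset.univ.filter
            (fun τ : Equiv.Perm (Fin l.1) => IsKing τ ∧ StrictContains τ σ),
          kingMu l.1 τ
termination_by n _ => n
decreasing_by
  have := l.2
  simp only [Finset.mem_Ico] at this
  omega

theorem contains_refl' {n : ℕ} (π : Equiv.Perm (Fin n)) : Contains π π :=
  ⟨RelEmbedding.refl _, fun _ _ => Iff.rfl⟩

theorem contains_trans' {a b c : ℕ} {x : Equiv.Perm (Fin a)} {y : Equiv.Perm (Fin b)}
    {z : Equiv.Perm (Fin c)} (h1 : Contains x y) (h2 : Contains y z) : Contains x z := by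
  obtain ⟨f, hf⟩ := h1
  obtain ⟨g, hg⟩ := h2
  exact ⟨f.trans g, fun a b => (hf a b).trans (hg _ _)⟩

theorem contains_le' {a b : ℕ} {x : Equiv.Perm (Fin a)} {y : Equiv.Perm (Fin b)}
    (h1 : Contains x y) : a ≤ b := by
  obtain ⟨f, hf⟩ := h1
  simpa using Fintype.card_le_of_injective f f.injective

theorem contains_eq' {n : ℕ} {x y : Equiv.Perm (Fin n)} (h1 : Contains x y) : x = y := by
  obtain ⟨f, hf⟩ := h1
  have hid : ∀ g : Fin n ↪o Fin n, ∀ i, g i = i := by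
    intro g i
    have hs : Function.Surjective g := Finite.surjective_of_injective g.injective
    have : RelIso.ofSurjective g hs = OrderIso.refl (Fin n) := Subsingleton.elim _ _
    have h2 := congrArg (fun e : Fin n ≃o Fin n => e i) this
    simpa using h2
  simp only [hid f] at hf
  have hm : StrictMono (fun i => y (x.symm i)) := by
    intro i j hij
    apply (hf _ _).1
    simpa using hij
  have h3 := hid (OrderEmbedding.ofStrictMono _ hm)
  ext i
  have := h3 (x i)
  simp at this
  rw [this]

theorem contains_one' {n : ℕ} (hn : 1 ≤ n) (x : Equiv.Perm (Fin 1)) (π : Equiv.Perm (Fin n)) :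
    Contains x π := by
  refine ⟨OrderEmbedding.ofStrictMono (fun _ => ⟨0, hn⟩) ?_, ?_⟩
  · intro a b h
    omega
  · intro a b
    have : a = b := Subsingleton.elim _ _
    simp [this]

def Avd (f : ℕ → ℤ) (n : ℕ) : Prop :=
  ∀ i j k l : ℕ, i < j → j < k → k < l → l < n →
    ¬ (f k < f i ∧ f i < f l ∧ f l < f j) ∧ ¬ (f j < f l ∧ f l < f i ∧ f i < f k)

theorem Avd.neg {f : ℕ → ℤ} {n : ℕ} (h : Avd f n) : Avd (fun i => - f i) n := by
  intro i j k l h1 h2 h3 h4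
  have := h i j k l h1 h2 h3 h4
  constructor
  · rintro ⟨a, b, c⟩
    exact this.2 ⟨by linarith, by linarith, by linarith⟩
  · rintro ⟨a, b, c⟩
    exact this.1 ⟨by linarith, by linarith, by linarith⟩

def SumD (f : ℕ → ℤ) (a b : ℕ) : Prop :=
  ∃ k, a < k ∧ k < b ∧ ∀ i j, a ≤ i → i < k → k ≤ j → j < b → f i < f j

theorem decomp_step (f : ℕ → ℤ) (hinj : Function.Injective f) (n : ℕ) (h : Avd f n) (a b : ℕ)
    (hb : b < n)
    (ih : ∀ k, a + 2 ≤ k → k ≤ b → SumD f a k ∨ SumD (fun i => - f i) a k)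
    (hs : SumD f a b) : SumD f a (b + 1) ∨ SumD (fun i => - f i) a (b + 1) := by
  classical
  have hk := Nat.find_spec hs
  have hmin := fun m => Nat.find_min hs (m := m)
  generalize Nat.find hs = k at hk hmin
  obtain ⟨h1, h2, h3⟩ := hk
  by_cases c1 : ∀ i, a ≤ i → i < k → f i < f b
  · left
    refine ⟨k, h1, by omega, fun i j hi hik hkj hj => ?_⟩
    rcases Nat.lt_succ_iff_lt_or_eq.1 hj with hj | rfl
    · exact h3 i j hi hik hkj hj
    · exact c1 i hi hik
  push Not at c1
  obtain ⟨c, hac, hck, hcb⟩ := c1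
  have hcb : f b < f c := lt_of_le_of_ne hcb (fun e => by have := hinj e; omega)
  by_cases c2 : ∀ i, a ≤ i → i < b → f b < f i
  · right
    refine ⟨b, by omega, by omega, fun i j hi hik hkj hj => ?_⟩
    have : j = b := by omega
    subst this
    have := c2 i hi hik
    simpa using this
  push Not at c2
  obtain ⟨d, had, hdb, hd⟩ := c2
  have hd : f d < f b := lt_of_le_of_ne hd (fun e => by have := hinj e; omega)
  have hdk : d < k := by
    by_contra hh
    have := h3 c d hac hck (by omega) hdb
    linarith
  have hcd : c ≠ d := by
    rintro rfl
    linarith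
  rcases ih k (by omega) (by omega) with ⟨m, hm1, hm2, hm3⟩ | ⟨m, hm1, hm2, hm3⟩
  · exfalso
    apply hmin m hm2
    refine ⟨hm1, by omega, fun i j hi him hmj hj => ?_⟩
    by_cases hjk : j < k
    · exact hm3 i j hi him hmj hjk
    · exact h3 i j hi (by omega) (by omega) hj
  · exfalso
    simp only [neg_lt_neg_iff] at hm3
    -- choose c' in the first part, d' in the second part
    have hc' : ∃ c', a ≤ c' ∧ c' < m ∧ f b < f c' := by
      by_cases hcm : c < m
      · exact ⟨c, hac, hcm, hcb⟩
      · exact ⟨a, le_rfl, hm1, hcb.trans (hm3 a c le_rfl hm1 (by omega) hck)⟩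
    have hd' : ∃ d', m ≤ d' ∧ d' < k ∧ f d' < f b := by
      by_cases hdm : d < m
      · exact ⟨m, le_rfl, hm2, (hm3 d m had hdm le_rfl hm2).trans hd⟩
      · exact ⟨d, by omega, hdk, hd⟩
    obtain ⟨c', x1, x2, x3⟩ := hc'
    obtain ⟨d', y1, y2, y3⟩ := hd'
    exact (h c' d' k b (by omega) (by omega) h2 hb).2
      ⟨y3, x3, h3 c' k x1 (by omega) le_rfl h2⟩

theorem decomp_all (f : ℕ → ℤ) (hinj : Function.Injective f) (n : ℕ) (h : Avd f n) (a : ℕ) :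
    ∀ b, a + 2 ≤ b → b ≤ n → SumD f a b ∨ SumD (fun i => - f i) a b := by
  intro b
  induction b using Nat.strong_induction_on with
  | _ b ih =>
    intro hab hbn
    obtain ⟨b, rfl⟩ : ∃ c, b = c + 1 := ⟨b - 1, by omega⟩
    by_cases hb2 : b = a + 1
    · subst hb2
      rcases lt_trichotomy (f a) (f (a + 1)) with hh | hh | hh
      · left
        refine ⟨a + 1, by omega, by omega, fun i j h1 h2 h3 h4 => ?_⟩
        obtain rfl : i = a := by omega
        obtain rfl : j = i + 1 := by omega
        exact hh
      · have := hinj hh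
        omega
      · right
        refine ⟨a + 1, by omega, by omega, fun i j h1 h2 h3 h4 => ?_⟩
        obtain rfl : i = a := by omega
        obtain rfl : j = i + 1 := by omega
        simpa using hh
    · have ih' : ∀ k, a + 2 ≤ k → k ≤ b → SumD f a k ∨ SumD (fun i => - f i) a k :=
        fun k h1 h2 => ih k (by omega) h1 (by omega)
      rcases ih' b (by omega) le_rfl with hs | hs
      · exact decomp_step f hinj n h a b (by omega) ih' hs
      · have := decomp_step (fun i => - f i) (fun x y e => hinj (by simpa using e)) n h.neg a b
          (by omega) (by simpa [or_comm] using ih') hs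
        simpa [or_comm] using this

theorem adj_all (f : ℕ → ℤ) (hinj : Function.Injective f) (n : ℕ) (h : Avd f n) :
    ∀ s a b, b = a + s → 2 ≤ s → b ≤ n → ∃ i, a ≤ i ∧ i + 1 < b ∧ ∀ j, a ≤ j → j < b →
      ¬ (f i < f j ∧ f j < f (i + 1)) ∧ ¬ (f (i + 1) < f j ∧ f j < f i) := by
  intro s
  induction s using Nat.strong_induction_on with
  | _ s ih =>
    intro a b hb hs hbn
    by_cases hs2 : s = 2
    · refine ⟨a, le_rfl, by omega, fun j h1 h2 => ?_⟩
      rcases (show j = a ∨ j = a + 1 by omega) with rfl | rfl <;> simp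
    have key : ∃ k, a < k ∧ k < b ∧
        ((∀ i j, a ≤ i → i < k → k ≤ j → j < b → f i < f j) ∨
          (∀ i j, a ≤ i → i < k → k ≤ j → j < b → f j < f i)) := by
      rcases decomp_all f hinj n h a b (by omega) hbn with ⟨k, h1, h2, h3⟩ | ⟨k, h1, h2, h3⟩
      · exact ⟨k, h1, h2, Or.inl h3⟩
      · exact ⟨k, h1, h2, Or.inr (by simpa using h3)⟩
    obtain ⟨k, h1, h2, h3⟩ := key
    by_cases hk : a + 2 ≤ k
    · obtain ⟨i, i1, i2, i3⟩ := ih (k - a) (by omega) a k (by omega) (by omega) (by omega)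
      refine ⟨i, i1, by omega, fun j j1 j2 => ?_⟩
      by_cases hj : j < k
      · exact i3 j j1 hj
      · rcases h3 with h3 | h3
        all_goals
          have p := h3 i j i1 (by omega) (by omega) j2
          have q := h3 (i + 1) j (by omega) (by omega) (by omega) j2
          constructor <;> rintro ⟨_, _⟩ <;> linarith
    · obtain ⟨i, i1, i2, i3⟩ := ih (b - k) (by omega) k b (by omega) (by omega) (by omega)
      refine ⟨i, by omega, by omega, fun j j1 j2 => ?_⟩
      by_cases hj : k ≤ j
      · exact i3 j hj j2
      · rcases h3 with h3 | h3
        all_goals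
          have p := h3 j i j1 (by omega) (by omega) (by omega)
          have q := h3 j (i + 1) j1 (by omega) (by omega) (by omega)
          constructor <;> rintro ⟨_, _⟩ <;> linarith

def emb4 {n : ℕ} (i j k l : Fin n) (h1 : i < j) (h2 : j < k) (h3 : k < l) : Fin 4 ↪o Fin n :=
  OrderEmbedding.ofStrictMono ![i, j, k, l] (by
    intro a b hab
    fin_cases a <;> fin_cases b <;> simp at hab ⊢ <;> order)

theorem vemb4 {n : ℕ} (i j k l : Fin n) (h1 : i < j) (h2 : j < k) (h3 : k < l) :
    emb4 i j k l h1 h2 h3 0 = i ∧ emb4 i j k l h1 h2 h3 1 = j ∧ emb4 i j k l h1 h2 h3 2 = k ∧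
      emb4 i j k l h1 h2 h3 3 = l :=
  ⟨rfl, rfl, rfl, rfl⟩

theorem vp2413 : p2413 0 = 1 ∧ p2413 1 = 3 ∧ p2413 2 = 0 ∧ p2413 3 = 2 :=
  ⟨rfl, rfl, rfl, rfl⟩

theorem vp3142 : p3142 0 = 2 ∧ p3142 1 = 0 ∧ p3142 2 = 3 ∧ p3142 3 = 1 :=
  ⟨rfl, rfl, rfl, rfl⟩

theorem king_contains {n : ℕ} (hn : 2 ≤ n) (σ : Equiv.Perm (Fin n)) (hk : IsKing σ) :
    Contains p3142 σ ∨ Contains p2413 σ := by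
  by_contra hcon
  push Not at hcon
  obtain ⟨hc1, hc2⟩ := hcon
  let f : ℕ → ℤ := fun i => if h : i < n then ((σ ⟨i, h⟩ : ℕ) : ℤ) else i
  have hf : ∀ i (h : i < n), f i = ((σ ⟨i, h⟩ : ℕ) : ℤ) := fun i h => by simp [f, h]
  have hf' : ∀ i, ¬ i < n → f i = i := fun i h => by simp [f, h]
  have hinj : Function.Injective f := by
    intro x y hxy
    by_cases hx : x < n <;> by_cases hy : y < n
    · rw [hf x hx, hf y hy] at hxy
      have : σ ⟨x, hx⟩ = σ ⟨y, hy⟩ := Fin.ext (by exact_mod_cast hxy)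
      simpa using σ.injective this
    · rw [hf x hx, hf' y hy] at hxy
      have := (σ ⟨x, hx⟩).2
      omega
    · rw [hf' x hx, hf y hy] at hxy
      have := (σ ⟨y, hy⟩).2
      omega
    · rw [hf' x hx, hf' y hy] at hxy
      omega
  have hav : Avd f n := by
    intro i j k l h1 h2 h3 h4
    rw [hf i (by omega), hf j (by omega), hf k (by omega), hf l (by omega)]
    simp only [Nat.cast_lt, Fin.val_fin_lt]
    constructor
    · rintro ⟨x, y, z⟩
      apply hc2
      refine ⟨emb4 ⟨i, by omega⟩ ⟨j, by omega⟩ ⟨k, by omega⟩ ⟨l, by omega⟩ h1 h2 h3, ?_⟩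
      intro a b
      fin_cases a <;> fin_cases b <;> simp [vemb4, vp2413] <;> order
    · rintro ⟨x, y, z⟩
      apply hc1
      refine ⟨emb4 ⟨i, by omega⟩ ⟨j, by omega⟩ ⟨k, by omega⟩ ⟨l, by omega⟩ h1 h2 h3, ?_⟩
      intro a b
      fin_cases a <;> fin_cases b <;> simp [vemb4, vp3142] <;> order
  obtain ⟨i, -, i2, i3⟩ := adj_all f hinj n hav n 0 n (by omega) hn le_rfl
  have hkk := hk ⟨i, by omega⟩ ⟨i + 1, i2⟩ rfl
  have hne : f i ≠ f (i + 1) := fun e => by have := hinj e; omega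
  have hbd : ∀ v : ℕ, v < n → ∃ j, j < n ∧ f j = v := by
    intro v hv
    refine ⟨σ.symm ⟨v, hv⟩, (σ.symm ⟨v, hv⟩).2, ?_⟩
    rw [hf _ (σ.symm ⟨v, hv⟩).2]
    simp
  have e1 := hf i (by omega)
  have e2 := hf (i + 1) i2
  unfold fdist at hkk
  have b1 := (σ ⟨i, by omega⟩).2
  have b2 := (σ ⟨i + 1, i2⟩).2
  generalize ((σ ⟨i, _⟩ : Fin n) : ℕ) = u at *
  generalize ((σ ⟨i + 1, _⟩ : Fin n) : ℕ) = v at *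
  rcases lt_trichotomy u v with huv | huv | huv
  · obtain ⟨j, j1, j2⟩ := hbd (u + 1) (by omega)
    exact (i3 j (by omega) j1).1 ⟨by omega, by omega⟩
  · omega
  · obtain ⟨j, j1, j2⟩ := hbd (v + 1) (by omega)
    exact (i3 j (by omega) j1).2 ⟨by omega, by omega⟩

open scoped Classical in
noncomputable def lowSum {n : ℕ} (π : Equiv.Perm (Fin n)) (l : ℕ) : ℤ :=
  ∑ τ ∈ Finset.univ.filter (fun τ : Equiv.Perm (Fin l) => IsKing τ ∧ Contains τ π), kingMu l τ

theorem kingMu_eq {n : ℕ} (hn : 2 ≤ n) (π : Equiv.Perm (Fin n)) :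
    kingMu n π = - ∑ l ∈ Finset.Ico 1 n, lowSum π l := by
  classical
  obtain ⟨n, rfl⟩ : ∃ m, n = m + 2 := ⟨n - 2, by omega⟩
  rw [kingMu, ← Finset.sum_attach (Finset.Ico 1 (n + 2))]
  congr 1
  refine Finset.sum_congr rfl fun l _ => ?_
  unfold lowSum
  refine Finset.sum_congr ?_ fun _ _ => rfl
  have := Finset.mem_Ico.1 l.2
  ext τ
  simp [StrictContains, this.2]

theorem lowSum_total {n N : ℕ} (hn : 2 ≤ n) (hN : n < N) (π : Equiv.Perm (Fin n))
    (hk : IsKing π) : ∑ l ∈ Finset.Ico 1 N, lowSum π l = 0 := by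
  classical
  have h1 : ∑ l ∈ Finset.Ico 1 N, lowSum π l = ∑ l ∈ Finset.Ico 1 (n + 1), lowSum π l := by
    symm
    apply Finset.sum_subset
    · intro x hx
      simp only [Finset.mem_Ico] at hx ⊢
      omega
    · intro x hx hx'
      simp only [Finset.mem_Ico] at hx hx'
      unfold lowSum
      rw [Finset.filter_false_of_mem, Finset.sum_empty]
      rintro τ - ⟨_, hc⟩
      have := contains_le' hc
      omega
  rw [h1, Finset.sum_Ico_succ_top (by omega)]
  have h2 : lowSum π n = kingMu n π := by
    unfold lowSum
    have : (Finset.univ.filter (fun τ : Equiv.Perm (Fin n) => IsKing τ ∧ Contains τ π)) = {π} := by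
      ext τ
      simp only [Finset.mem_filter, Finset.mem_univ, true_and, Finset.mem_singleton]
      constructor
      · exact fun h => contains_eq' h.2
      · rintro rfl
        exact ⟨hk, contains_refl' _⟩
    rw [this, Finset.sum_singleton]
  rw [h2, kingMu_eq hn]
  ring

theorem general {n m : ℕ} (π : Equiv.Perm (Fin n)) (σ : Equiv.Perm (Fin m)) (hσ : IsKing σ)
    (hm : 2 ≤ m) (hs : StrictContains σ π)
    (h0 : ∀ l (τ : Equiv.Perm (Fin l)), 1 ≤ l → IsKing τ → StrictContains τ π →
      ¬ Contains τ σ → kingMu l τ = 0) : kingMu n π = 0 := by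
  classical
  have hmn := hs.2
  rw [kingMu_eq (by omega), ← neg_zero, ← lowSum_total hm hmn σ hσ]
  congr 1
  refine Finset.sum_congr rfl fun l hl => ?_
  have := Finset.mem_Ico.1 hl
  unfold lowSum
  symm
  apply Finset.sum_subset
  · intro τ hτ
    simp only [Finset.mem_filter, Finset.mem_univ, true_and] at hτ ⊢
    exact ⟨hτ.1, contains_trans' hτ.2 hs.1⟩
  · intro τ hτ hτ'
    simp only [Finset.mem_filter, Finset.mem_univ, true_and] at hτ hτ'
    exact h0 l τ this.1 hτ.1 ⟨hτ.2, this.2⟩ (fun hc => hτ' ⟨hτ.1, hc⟩)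

theorem avoid_zero (p q : Equiv.Perm (Fin 4)) (hq : IsKing q)
    (hpq : ∀ (n : ℕ) (σ : Equiv.Perm (Fin n)), 2 ≤ n → IsKing σ → Contains p σ ∨ Contains q σ) :
    ∀ (n : ℕ) (τ : Equiv.Perm (Fin n)), 5 ≤ n → IsKing τ → ¬ Contains p τ → kingMu n τ = 0 := by
  intro n
  induction n using Nat.strong_induction_on with
  | _ n ih =>
    intro τ hn hk hp
    have hqt := (hpq n τ (by omega) hk).resolve_left hp
    refine general τ q hq (by omega) ⟨hqt, by omega⟩ ?_
    intro l ρ hl hρ hρτ hρq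
    have hpρ : ¬ Contains p ρ := fun h => hp (contains_trans' h hρτ.1)
    by_cases hl1 : l = 1
    · subst hl1
      exact absurd (contains_one' (by omega) ρ q) hρq
    have hqρ := (hpq l ρ (by omega) hρ).resolve_left hpρ
    have := contains_le' hqρ
    by_cases hl4 : l = 4
    · subst hl4
      rw [contains_eq' hqρ] at hρq
      exact absurd (contains_refl' _) hρq
    exact ih l hρτ.2 ρ (by omega) hρ hpρ

theorem rest_zero (p q : Equiv.Perm (Fin 4)) (hq : IsKing q)
    (hpq : ∀ (n : ℕ) (σ : Equiv.Perm (Fin n)), 2 ≤ n → IsKing σ → Contains p σ ∨ Contains q σ)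
    {m k l : ℕ} (σ : Equiv.Perm (Fin m)) (δ : Equiv.Perm (Fin k)) (τ : Equiv.Perm (Fin l))
    (hp : StrictContains p σ) (hqs : StrictContains q σ) (hl : 1 ≤ l) (hτ : IsKing τ)
    (hτδ : Contains τ δ) (hpδ : ¬ StrictContains p δ) (hn : ¬ Contains τ σ) :
    kingMu l τ = 0 := by
  have hpτ : ¬ Contains p τ := by
    intro hc
    have h1 := contains_trans' hc hτδ
    have h2 := contains_le' h1
    have h3 : k = 4 := by
      by_contra hk
      exact hpδ ⟨h1, by omega⟩
    subst h3
    rw [← contains_eq' h1] at hτδ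
    exact hn (contains_trans' hτδ hp.1)
  have h4 := hp.2
  by_cases hl1 : l = 1
  · subst hl1
    exact absurd (contains_one' (by omega) τ σ) hn
  have hqτ := (hpq l τ (by omega) hτ).resolve_left hpτ
  have := contains_le' hqτ
  by_cases hl4 : l = 4
  · subst hl4
    rw [← contains_eq' hqτ] at hn
    exact absurd hqs.1 hn
  exact avoid_zero p q hq hpq l τ (by omega) hτ hpτ

theorem king_a : IsKing p2413 := by
  unfold IsKing fdist
  decide

theorem king_b : IsKing p3142 := by
  unfold IsKing fdist
  decide

theorem exists_cover {n l : ℕ} (π : Equiv.Perm (Fin n)) (τ : Equiv.Perm (Fin l)) (hτ : IsKing τ)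
    (h : StrictContains τ π) : ∃ (k : ℕ) (δ : Equiv.Perm (Fin k)), Contains τ δ ∧
      (IsKing δ ∧ StrictContains δ π ∧
        ¬ ∃ (l' : ℕ) (δ' : Equiv.Perm (Fin l')),
          IsKing δ' ∧ StrictContains δ δ' ∧ StrictContains δ' π) := by
  induction hd : n - l using Nat.strong_induction_on generalizing l with
  | _ d ih =>
    by_cases hc : ∃ (l' : ℕ) (δ' : Equiv.Perm (Fin l')),
          IsKing δ' ∧ StrictContains τ δ' ∧ StrictContains δ' π
    · obtain ⟨l', δ', h1, h2, h3⟩ := hc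
      have := h2.2
      have := h3.2
      obtain ⟨k, δ, h4, h5⟩ := ih (n - l') (by omega) δ' h1 h3 rfl
      exact ⟨k, δ, contains_trans' h2.1 h4, h5⟩
    · exact ⟨l, τ, contains_refl' _, hτ, h, hc⟩

/-- if exactly one element of `C(π)` (the kings covered by `π`)
strictly contains both [3142] and [2413], then `μ(π) = 0`. -/
theorem mu_eq_zero_of_unique_cover (n : ℕ) (π : Equiv.Perm (Fin n)) (hπ : IsKing π)
    (h : ∃! s : Σ l : ℕ, Equiv.Perm (Fin l),
      (IsKing s.2 ∧ StrictContains s.2 π ∧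
        ¬ ∃ (l' : ℕ) (δ : Equiv.Perm (Fin l')),
          IsKing δ ∧ StrictContains s.2 δ ∧ StrictContains δ π) ∧
      StrictContains p3142 s.2 ∧ StrictContains p2413 s.2) :
    kingMu n π = 0 := by
  obtain ⟨⟨m, σ⟩, ⟨⟨hk, hs, -⟩, ha, hb⟩, huniq⟩ := h
  have h4 := ha.2
  refine general π σ hk (by simp only at h4; omega) hs ?_
  intro l τ hl hτ hτπ hn
  obtain ⟨k, δ, h1, h2⟩ := exists_cover π τ hτ hτπ
  by_cases hA : StrictContains p3142 δ
  · by_cases hB : StrictContains p2413 δ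
    · have := huniq ⟨k, δ⟩ ⟨h2, hA, hB⟩
      cases this
      exact absurd h1 hn
    · exact rest_zero p2413 p3142 king_b (fun n σ a b => (king_contains a σ b).symm) σ δ τ hb ha hl
        hτ h1 hB hn
  · exact rest_zero p3142 p2413 king_a (fun n σ a b => king_contains a σ b) σ δ τ ha hb hl
      hτ h1 hA hn
end
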